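/- arXiv:2503.01350 — 4 statements merged into one kernel-verified Lean document; each statement's English description precedes it below -/
import Mathlib

section
/- Let G be a finite connected simple graph on vertex set V with nonnegative edge weights w, let x̄ : V → {0,1} with nonempty facility set F = {k ∈ V : x̄(k) = 1}, let i ∈ V, and let M ∈ ℝ satisfy M ≥ min_{j ∈ F} d_w(k,j) for every k ∈ V. Then the optimal value of the linear program SP^i, namely sup { π(i) : π : V → ℝ, π(k) ≥ 0 for all k, π(k) ≤ π(l) + w({k,l}) and π(l) ≤ π(k) + w({k,l}) for every edge {k,l} of G, and π(k) ≤ M·(1 − x̄(k)) for all k }, equals min_{j ∈ F} d_w(i,j), the distance from i to its nearest facility. -/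
open SimpleGraph

/-- The weighted distance between `i` and `j`: the infimum (`sInf` in `ℝ`) of the
weighted lengths of all walks from `i` to `j`. -/
noncomputable def gdist {V : Type*} (G : SimpleGraph V) (w : Sym2 V → ℝ) (i j : V) : ℝ :=
  sInf {L : ℝ | ∃ p : G.Walk i j, (p.edges.map w).sum = L}

theorem walk_sum_nonneg {V : Type*} (G : SimpleGraph V)
    (w : Sym2 V → ℝ) (hw : ∀ e ∈ G.edgeSet, 0 ≤ w e) {a b : V} (p : G.Walk a b) :
    0 ≤ (p.edges.map w).sum := by
  apply List.sum_nonneg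
  intro y hy
  obtain ⟨e, he, rfl⟩ := List.mem_map.1 hy
  exact hw e (p.edges_subset_edgeSet he)

theorem gdist_le_walk {V : Type*} (G : SimpleGraph V)
    (w : Sym2 V → ℝ) (hw : ∀ e ∈ G.edgeSet, 0 ≤ w e) {a b : V} (p : G.Walk a b) :
    gdist G w a b ≤ (p.edges.map w).sum := by
  apply csInf_le
  · refine ⟨0, ?_⟩
    rintro _ ⟨q, rfl⟩
    exact walk_sum_nonneg G w hw q
  · exact ⟨p, rfl⟩

theorem le_gdist {V : Type*} (G : SimpleGraph V) (hG : G.Connected)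
    (w : Sym2 V → ℝ) {a b : V} {c : ℝ}
    (h : ∀ p : G.Walk a b, c ≤ (p.edges.map w).sum) : c ≤ gdist G w a b := by
  obtain ⟨p⟩ := hG.preconnected a b
  refine le_csInf (Set.nonempty_of_mem (x := (p.edges.map w).sum) ⟨p, rfl⟩) ?_
  rintro _ ⟨q, rfl⟩
  exact h q

theorem pot_le_walk {V : Type*} (G : SimpleGraph V)
    (w : Sym2 V → ℝ) (f : V → ℝ) (hf : ∀ k l, G.Adj k l → f k ≤ f l + w s(k, l))
    {a b : V} (p : G.Walk a b) : f a ≤ f b + (p.edges.map w).sum := by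
  induction p with
  | nil => simp
  | cons h p ih =>
    have := hf _ _ h
    simp only [Walk.edges_cons, List.map_cons, List.sum_cons]
    linarith

/-- The optimal value of the formulation `SP^i` — maximizing `π i` over nonnegative
node potentials satisfying the edge inequalities in both directions and the big-M
constraints `π k ≤ M * (1 - x̄ k)` — equals the distance from `i` to its nearest
facility, provided `M ≥ min_{j ∈ F} d_w(k,j)` for every vertex `k`. -/
theorem stmt8 {V : Type*} [Fintype V] (G : SimpleGraph V) (hG : G.Connected)
    (w : Sym2 V → ℝ) (hw : ∀ e ∈ G.edgeSet, 0 ≤ w e)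
    (x : V → ℝ) (hx01 : ∀ k, x k = 0 ∨ x k = 1)
    (F : Finset V) (hFx : ∀ k, k ∈ F ↔ x k = 1) (hF : F.Nonempty)
    (i : V) (M : ℝ) (hM : ∀ k, F.inf' hF (fun j => gdist G w k j) ≤ M) :
    sSup {y : ℝ | ∃ π : V → ℝ, (∀ k, 0 ≤ π k) ∧
        (∀ k l, G.Adj k l → π k ≤ π l + w s(k, l)) ∧
        (∀ k, π k ≤ M * (1 - x k)) ∧ π i = y} =
      F.inf' hF (fun j => gdist G w i j) := by
  apply IsGreatest.csSup_eq
  constructor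
  · refine ⟨fun k => F.inf' hF (fun j => gdist G w k j), ?_, ?_, ?_, rfl⟩
    · intro k
      apply Finset.le_inf'
      intro j _
      exact le_gdist G hG w (walk_sum_nonneg G w hw)
    · intro k l hkl
      obtain ⟨j, hj, hjl⟩ := Finset.exists_mem_eq_inf' hF (fun j => gdist G w l j)
      have h1 : F.inf' hF (fun j => gdist G w k j) ≤ gdist G w k j :=
        Finset.inf'_le (fun j => gdist G w k j) hj
      have h2 : gdist G w k j - w s(k, l) ≤ gdist G w l j := by
        apply le_gdist G hG w
        intro p
        have := gdist_le_walk G w hw (Walk.cons hkl p)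
        simp only [Walk.edges_cons, List.map_cons, List.sum_cons] at this
        linarith
      simp only at hjl ⊢
      linarith
    · intro k
      rcases hx01 k with h | h
      · simpa [h] using hM k
      · have h1 : F.inf' hF (fun j => gdist G w k j) ≤ gdist G w k k :=
          Finset.inf'_le (fun j => gdist G w k j) ((hFx k).2 h)
        have h2 := gdist_le_walk G w hw (Walk.nil : G.Walk k k)
        simp only [Walk.edges_nil, List.map_nil, List.sum_nil] at h2
        simp only [h, sub_self, mul_zero]
        linarith
  · rintro _ ⟨f, h0, h1, h2, rfl⟩
    apply Finset.le_inf'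
    intro j hj
    apply le_gdist G hG w
    intro p
    have h3 := pot_le_walk G w f h1 p
    have h4 := h2 j
    rw [(hFx j).1 hj] at h4
    linarith
end

section
/- Let G be a finite connected simple graph on vertex set V with nonnegative edge weights w, let x̄ : V → {0,1} with nonempty facility set F = {k ∈ V : x̄(k) = 1}, and let i ∈ V. Consider the dual feasible set D of pairs (π, μ) with π : V ∪ {t} → ℝ (t an auxiliary vertex not in V) and μ : V → ℝ satisfying μ(k) ≥ 0 for all k ∈ V, π(k) ≤ π(l) + w({k,l}) and π(l) ≤ π(k) + w({k,l}) for every edge {k,l} of G, and π(k) ≤ π(t) + μ(k) for every k ∈ V, with objective Φ(π,μ) = π(i) − π(t) − ∑_{k ∈ V} x̄(k)·μ(k). Then the supremum of Φ over D is attained at a pair (π, μ) satisfying π(k) ≥ 0 for all k ∈ V, π(t) = 0, and μ(k) = 0 for every k ∈ V with x̄(k) = 1. -/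
open SimpleGraph

/-- The supremum of the dual objective `Φ(π,μ) = π i - π t - ∑ k, x̄ k * μ k` over the
dual feasible set is attained at a pair `(π, μ)` with `π k ≥ 0` for all `k ∈ V`,
`π t = 0`, and `μ k = 0` whenever `x̄ k = 1`. Here `π t` is modelled as a separate
real variable `πt` for the auxiliary sink `t`. -/
theorem stmt9 {V : Type*} [Fintype V] (G : SimpleGraph V) (hG : G.Connected)
    (w : Sym2 V → ℝ) (hw : ∀ e ∈ G.edgeSet, 0 ≤ w e)
    (x : V → ℝ) (hx01 : ∀ k, x k = 0 ∨ x k = 1)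
    (F : Finset V) (hFx : ∀ k, k ∈ F ↔ x k = 1) (hF : F.Nonempty) (i : V) :
    ∃ π : V → ℝ, ∃ πt : ℝ, ∃ μ : V → ℝ,
      ((∀ k, 0 ≤ μ k) ∧ (∀ k l, G.Adj k l → π k ≤ π l + w s(k, l)) ∧
        (∀ k, π k ≤ πt + μ k)) ∧
      (∀ k, 0 ≤ π k) ∧ πt = 0 ∧ (∀ k, x k = 1 → μ k = 0) ∧
      IsGreatest {y : ℝ | ∃ π' : V → ℝ, ∃ πt' : ℝ, ∃ μ' : V → ℝ,
          (∀ k, 0 ≤ μ' k) ∧ (∀ k l, G.Adj k l → π' k ≤ π' l + w s(k, l)) ∧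
          (∀ k, π' k ≤ πt' + μ' k) ∧ y = π' i - πt' - ∑ k : V, x k * μ' k}
        (π i - πt - ∑ k : V, x k * μ k) := by
  classical
  let S : V → Set ℝ := fun k => {L | ∃ f ∈ F, ∃ p : G.Walk k f, (p.edges.map w).sum = L}
  have hSne : ∀ k, (S k).Nonempty := by
    intro k
    obtain ⟨f, hf⟩ := hF
    obtain ⟨p⟩ := hG.preconnected k f
    exact ⟨_, f, hf, p, rfl⟩
  have hS0 : ∀ k, ∀ L ∈ S k, 0 ≤ L := by
    rintro k L ⟨f, hf, p, rfl⟩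
    apply List.sum_nonneg
    intro a ha
    obtain ⟨e, he, rfl⟩ := List.mem_map.1 ha
    exact hw e (p.edges_subset_edgeSet he)
  have hbdd : ∀ k, BddBelow (S k) := fun k => ⟨0, fun L hL => hS0 k L hL⟩
  have hpos : ∀ k, 0 ≤ sInf (S k) := fun k => le_csInf (hSne k) (hS0 k)
  have hzero : ∀ k, x k = 1 → sInf (S k) = 0 := by
    intro k hk
    refine le_antisymm (csInf_le (hbdd k) ?_) (hpos k)
    exact ⟨k, (hFx k).2 hk, Walk.nil, by simp⟩
  have hedge : ∀ k l, G.Adj k l → sInf (S k) ≤ sInf (S l) + w s(k, l) := by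
    intro k l h
    rw [← sub_le_iff_le_add]
    refine le_csInf (hSne l) ?_
    rintro L ⟨f, hf, p, rfl⟩
    rw [sub_le_iff_le_add]
    exact csInf_le (hbdd k) ⟨f, hf, Walk.cons h p, by simp [add_comm]⟩
  have hμ : ∀ k, sInf (S k) ≤ 0 + (if x k = 1 then 0 else sInf (S k)) := by
    intro k
    split_ifs with h
    · rw [hzero k h]; simp
    · simp
  have hμ0 : ∀ k, 0 ≤ (if x k = 1 then 0 else sInf (S k)) := by
    intro k
    split_ifs with h
    · exact le_rfl
    · exact hpos k
  refine ⟨fun k => sInf (S k), 0, fun k => if x k = 1 then 0 else sInf (S k),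
    ⟨hμ0, hedge, hμ⟩, hpos, rfl, fun k hk => by simp [hk],
    ⟨_, _, _, hμ0, hedge, hμ, rfl⟩, ?_⟩
  rintro y ⟨π', πt', μ', h1, h2, h3, rfl⟩
  have hsum : ∑ k : V, x k * (if x k = 1 then 0 else sInf (S k)) = 0 := by
    apply Finset.sum_eq_zero
    intro k _
    rcases hx01 k with h | h <;> simp [h]
  have hwalk : ∀ a b (p : G.Walk a b), π' a ≤ π' b + (p.edges.map w).sum := by
    intro a b p
    induction p with
    | nil => simp
    | cons h p ih =>
      have := h2 _ _ h
      simp only [Walk.edges_cons, List.map_cons, List.sum_cons]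
      linarith
  have key : π' i - πt' - ∑ k : V, x k * μ' k ≤ sInf (S i) := by
    refine le_csInf (hSne i) ?_
    rintro L ⟨f, hf, p, rfl⟩
    have a1 := hwalk _ _ p
    have a2 := h3 f
    have a3 : x f * μ' f ≤ ∑ k : V, x k * μ' k :=
      Finset.single_le_sum (f := fun k => x k * μ' k)
        (fun k _ => mul_nonneg (by rcases hx01 k with h | h <;> simp [h]) (h1 k))
        (Finset.mem_univ f)
    rw [(hFx f).1 hf, one_mul] at a3
    linarith
  simp only [hsum]
  linarith
end

section
/- Let G be a finite connected simple graph on vertex set V with |V| = n, with nonnegative base edge lengths ℓ and nonnegative upper bounds u on the edges, and let 1 ≤ p ≤ n. For a vertex k ∈ V, let M_k be the (n−p+1)-th smallest value of the list (d_{ℓ+u}(k,j))_{j ∈ V} sorted in nondecreasing order, where d_{ℓ+u} is the weighted distance with all edges downgraded to their maximum. Then for every facility set X ⊆ V with |X| = p and every downgrade γ with 0 ≤ γ_e ≤ u_e on each edge e, the distance from k to its nearest facility after the downgrade satisfies min_{j ∈ X} d_{ℓ+γ}(k,j) ≤ M_k; that is, M_k is a valid big-M value for the constraint π(k) ≤ M_k·(1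 − x(k)). -/
open SimpleGraph

theorem gdist_mono_aux {V : Type*} (G : SimpleGraph V) (hG : G.Connected) (w w' : Sym2 V → ℝ)
    (h0 : ∀ e ∈ G.edgeSet, 0 ≤ w e) (h1 : ∀ e ∈ G.edgeSet, w e ≤ w' e) (i j : V) :
    gdist G w i j ≤ gdist G w' i j := by
  unfold gdist
  obtain ⟨q⟩ := hG.preconnected i j
  refine le_csInf (Set.nonempty_of_mem ⟨q, rfl⟩) ?_
  rintro L ⟨r, rfl⟩
  refine le_trans (csInf_le ⟨0, ?_⟩ ⟨r, rfl⟩) ?_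
  · rintro L ⟨t, rfl⟩
    apply List.sum_nonneg
    intro x hx
    obtain ⟨e, he, rfl⟩ := List.mem_map.1 hx
    exact h0 e (t.edges_subset_edgeSet he)
  · apply List.sum_le_sum
    intro e he
    exact h1 e (r.edges_subset_edgeSet he)

theorem countP_sorted_aux (l : List ℝ) (hl : l.Pairwise (· ≤ ·)) (i : ℕ) (hi : i < l.length) :
    l.countP (fun x => decide (l[i] < x)) + i + 1 ≤ l.length := by
  have h1 : (l.take (i+1)).countP (fun x => decide (l[i] < x)) = 0 := by
    rw [List.countP_eq_zero]
    intro x hx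
    obtain ⟨m, hm, rfl⟩ := List.mem_iff_getElem.1 hx
    rw [List.length_take] at hm
    rw [List.getElem_take]
    simp only [decide_eq_true_eq, not_lt]
    rcases Nat.lt_or_ge m i with h | h
    · exact List.pairwise_iff_getElem.1 hl m i (by omega) hi h
    · have : m = i := by omega
      subst this
      exact le_rfl
  have h2 := List.countP_le_length (p := fun x => decide (l[i] < x)) (l := l.drop (i+1))
  have h3 := List.countP_append (p := fun x => decide (l[i] < x))
    (l₁ := l.take (i+1)) (l₂ := l.drop (i+1))
  rw [List.take_append_drop] at h3
  rw [List.length_drop] at h2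
  omega

/-- `M_k`, the `(n-p+1)`-th smallest of the distances `d_{ℓ+u}(k,j)`, `j ∈ V` (zero-indexed
position `n - p` of the sorted list), is a valid big-M: for every facility set `X` of
cardinality `p` and every downgrade `γ` with `0 ≤ γ_e ≤ u_e`, the distance from `k` to
its nearest facility after the downgrade is at most `M_k`. -/
theorem stmt14 {V : Type*} [Fintype V] [DecidableEq V] (G : SimpleGraph V) (hG : G.Connected)
    (n : ℕ) (hn : Fintype.card V = n)
    (ℓ u : Sym2 V → ℝ)
    (hℓ : ∀ e ∈ G.edgeSet, 0 ≤ ℓ e) (hu : ∀ e ∈ G.edgeSet, 0 ≤ u e)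
    (p : ℕ) (hp1 : 1 ≤ p) (hpn : p ≤ n) (k : V) (Mk : ℝ)
    (hMk : Mk = ((Finset.univ.val.map
      (fun j => gdist G (fun e => ℓ e + u e) k j)).sort (· ≤ ·)).getD (n - p) 0) :
    ∀ X : Finset V, X.card = p → ∀ hXne : X.Nonempty,
      ∀ γ : Sym2 V → ℝ, (∀ e ∈ G.edgeSet, 0 ≤ γ e ∧ γ e ≤ u e) →
        X.inf' hXne (fun j => gdist G (fun e => ℓ e + γ e) k j) ≤ Mk := by
  intro X hX hXne γ hγ
  by_contra hcon
  rw [not_le, Finset.lt_inf'_iff] at hcon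
  set f : V → ℝ := fun j => gdist G (fun e => ℓ e + u e) k j with hf
  have hlt : ∀ j ∈ X, Mk < f j := fun j hj => lt_of_lt_of_le (hcon j hj)
    (gdist_mono_aux G hG _ _ (fun e he => add_nonneg (hℓ e he) (hγ e he).1)
      (fun e he => by have := (hγ e he).2; linarith) k j)
  set l := (Finset.univ.val.map f).sort (· ≤ ·) with hl
  have hlen : l.length = n := by rw [hl, Multiset.length_sort]; simp [hn]
  have hi : n - p < l.length := by omega
  have hM : Mk = l[n - p] := by rw [hMk, List.getD_eq_getElem _ _ hi]
  have h1 := countP_sorted_aux l (Multiset.pairwise_sort _ _) (n - p) hi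
  rw [← hM, ← Multiset.coe_countP] at h1
  have h2 : (l : Multiset ℝ) = Finset.univ.val.map f := Multiset.sort_eq _ _
  have h3 : p ≤ Multiset.countP (fun x => Mk < x) (l : Multiset ℝ) := by
    rw [h2, Multiset.countP_map, ← hX]
    change X.card ≤ (Finset.univ.filter (fun j => Mk < f j)).card
    exact Finset.card_le_card (fun j hj => by simpa using hlt j hj)
  have h4 : p ≤ Multiset.countP (LT.lt Mk) (l : Multiset ℝ) := h3
  omega
end

section
/- Let n ≥ 1, let g : Fin n → ℕ and b : Fin n → ℕ be positive (g(i) ≥ 1 and b(i) ≥ 1 for all i), let K ∈ ℕ with g(i) ≤ K for all i, and let U > 0 be a real number. Set u = max_i g(i), R = u + 1, and ℓ(i) = R − g(i) for each i. Then the following are equivalent: (1) there exists γ : Fin n → ℝ with 0 ≤ γ(i) ≤ u for all i, ∑_i γ(i) ≤ K, and ∑_{i : ℓ(i) + γ(i) ≥ R} b(i) ≥ U; (2) there exists a subset M ⊆ Fin n with ∑_{i ∈ M} g(i) ≤ K and ∑_{i ∈ M} b(i) ≥ U. (This is the correspondence, used in the NP-hardness proof of the attacker's problem on star networks, between feasible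 edge downgrades un-covering demand at least U and solutions of the KNAPSACK instance with weights g, values b, capacity K, and target U: on the star with facility at the central node, edge lengths ℓ(i), uniform downgrading costs 1, uniform upper bound u, budget K, and coverage radius R, the satellite node i is un-covered after downgrade γ exactly when ℓ(i) + γ(i) ≥ R.) -/
/-- Correspondence used in the NP-hardness proof of the attacker's problem on star
networks: with `u = max_i g i`, `R = u + 1` and edge lengths `ℓ i = R - g i`, there is
a feasible downgrade `γ` (with `0 ≤ γ i ≤ u`, total cost `∑ γ i ≤ K`) un-covering
demand at least `U` — satellite `i` is un-covered iff `ℓ i + γ i ≥ R` — if and only if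
the KNAPSACK instance with weights `g`, values `b`, capacity `K` and target `U` has a
solution. -/
theorem stmt16 (n : ℕ) (hn : 1 ≤ n) (g b : Fin n → ℕ)
    (hg : ∀ i, 1 ≤ g i) (hb : ∀ i, 1 ≤ b i)
    (K : ℕ) (hgK : ∀ i, g i ≤ K) (U : ℝ) (hU : 0 < U)
    (u : ℕ) (hu : u = Finset.univ.sup g)
    (R : ℝ) (hR : R = (u : ℝ) + 1)
    (ℓ : Fin n → ℝ) (hℓ : ∀ i, ℓ i = R - (g i : ℝ)) :
    (∃ γ : Fin n → ℝ, (∀ i, 0 ≤ γ i ∧ γ i ≤ (u : ℝ)) ∧ (∑ i, γ i) ≤ (K : ℝ) ∧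
        U ≤ ∑ i ∈ Finset.univ.filter (fun i => R ≤ ℓ i + γ i), (b i : ℝ)) ↔
      (∃ M : Finset (Fin n), (∑ i ∈ M, g i) ≤ K ∧ U ≤ ∑ i ∈ M, (b i : ℝ)) := by
  constructor
  · rintro ⟨γ, hγ, hK, hUb⟩
    refine ⟨_, ?_, hUb⟩
    have h1 : ∑ i ∈ Finset.univ.filter (fun i => R ≤ ℓ i + γ i), (g i : ℝ) ≤
        ∑ i ∈ Finset.univ.filter (fun i => R ≤ ℓ i + γ i), γ i := by
      apply Finset.sum_le_sum
      intro i hi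
      have h2 := (Finset.mem_filter.mp hi).2
      rw [hℓ i] at h2
      linarith
    have h3 : ∑ i ∈ Finset.univ.filter (fun i => R ≤ ℓ i + γ i), γ i ≤ ∑ i, γ i :=
      Finset.sum_le_sum_of_subset_of_nonneg (Finset.subset_univ _) (fun i _ _ => (hγ i).1)
    have h4 := (h1.trans h3).trans hK
    exact_mod_cast h4
  · rintro ⟨M, hM, hUb⟩
    refine ⟨fun i => if i ∈ M then (g i : ℝ) else 0, ?_, ?_, ?_⟩
    · intro i
      have h : (g i : ℝ) ≤ u := by
        rw [hu]
        exact_mod_cast Finset.le_sup (f := g) (Finset.mem_univ i)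
      dsimp only
      split_ifs
      · exact ⟨by positivity, h⟩
      · exact ⟨le_rfl, by positivity⟩
    · rw [Finset.sum_ite_mem, Finset.univ_inter]
      exact_mod_cast hM
    · refine hUb.trans (Finset.sum_le_sum_of_subset_of_nonneg ?_ (fun i _ _ => by positivity))
      intro i hi
      simp [hi, hℓ i]
end
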